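/- Let I be a *-homogeneous ideal of D. Then I·D_{M(I)} ∩ D = I, i.e., the contraction to D of the extension of I to the localization of D at the prime ideal M(I) equals I. -/

import Mathlib

open scoped nonZeroDivisors

/-- A star operation on the nonzero fractional ideals of an integral domain `D`
with quotient field `K`: it fixes nonzero principal fractional ideals, commutes with
multiplication by nonzero principal fractional ideals, is extensive, monotone and
idempotent (on nonzero fractional ideals). -/
structure StarOperation (D K : Type*) [CommRing D] [IsDomain D] [Field K]
    [Algebra D K] [IsFractionRing D K] where
  star : FractionalIdeal D⁰ K → FractionalIdeal D⁰ K
  star_spanSingleton : ∀ x : K, x ≠ 0 →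
    star (FractionalIdeal.spanSingleton D⁰ x) = FractionalIdeal.spanSingleton D⁰ x
  star_smul : ∀ (x : K) (I : FractionalIdeal D⁰ K), x ≠ 0 → I ≠ 0 →
    star (FractionalIdeal.spanSingleton D⁰ x * I) = FractionalIdeal.spanSingleton D⁰ x * star I
  le_star : ∀ I : FractionalIdeal D⁰ K, I ≠ 0 → I ≤ star I
  star_mono : ∀ I J : FractionalIdeal D⁰ K, I ≠ 0 → J ≠ 0 → I ≤ J → star I ≤ star J
  star_idem : ∀ I : FractionalIdeal D⁰ K, I ≠ 0 → star (star I) = star I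

namespace StarOperation

variable {D K : Type*} [CommRing D] [IsDomain D] [Field K] [Algebra D K] [IsFractionRing D K]
variable (s : StarOperation D K)

/-- `*` has finite character: for every nonzero fractional ideal `I`, `I^*` is the union
of `J^*` over the nonzero finitely generated fractional subideals `J` of `I`. -/
def FiniteCharacter : Prop :=
  ∀ I : FractionalIdeal D⁰ K, I ≠ 0 → ∀ x ∈ s.star I,
    ∃ J : FractionalIdeal D⁰ K, J ≠ 0 ∧ (J : Submodule D K).FG ∧ J ≤ I ∧ x ∈ s.star J

/-- A (nonzero) integral ideal `I` of `D` is a `*`-ideal if `I^* = I`. -/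
def IsStarIdeal (I : Ideal D) : Prop :=
  I ≠ ⊥ ∧ s.star (I : FractionalIdeal D⁰ K) = (I : FractionalIdeal D⁰ K)

/-- An integral ideal `I` of `D` is a `*`-ideal of finite type if `I = J^*` for some
nonzero finitely generated ideal `J`. -/
def IsFiniteTypeStarIdeal (I : Ideal D) : Prop :=
  ∃ J : Ideal D, J ≠ ⊥ ∧ J.FG ∧
    s.star (J : FractionalIdeal D⁰ K) = (I : FractionalIdeal D⁰ K)

/-- A maximal `*`-ideal: maximal among proper integral `*`-ideals. -/
def IsMaxStarIdeal (M : Ideal D) : Prop :=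
  M ≠ ⊤ ∧ s.IsStarIdeal M ∧ ∀ J : Ideal D, J ≠ ⊤ → s.IsStarIdeal J → M ≤ J → J = M

/-- `I` is `*`-homogeneous: a proper `*`-ideal of finite type such that `(J + J')^* ≠ D`
for every pair `J`, `J'` of proper `*`-ideals of finite type containing `I`. -/
def IsHomog (I : Ideal D) : Prop :=
  I ≠ ⊤ ∧ s.IsStarIdeal I ∧ s.IsFiniteTypeStarIdeal I ∧
    ∀ J J' : Ideal D, J ≠ ⊤ → J' ≠ ⊤ → s.IsStarIdeal J → s.IsStarIdeal J' →
      s.IsFiniteTypeStarIdeal J → s.IsFiniteTypeStarIdeal J' → I ≤ J → I ≤ J' →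
      s.star ((J + J' : Ideal D) : FractionalIdeal D⁰ K) ≠ 1

/-- The set `M(I) = {x ∈ D : (xD + I)^* ≠ D}` attached to an ideal `I`. -/
def MSet (I : Ideal D) : Set D :=
  {x : D | s.star ((Ideal.span {x} + I : Ideal D) : FractionalIdeal D⁰ K) ≠ 1}

/-- `A` and `B` are `*`-comaximal if `(A + B)^* = D`. -/
def StarComaximal (A B : Ideal D) : Prop :=
  s.star ((A + B : Ideal D) : FractionalIdeal D⁰ K) = 1

/-- An integral ideal `I` is `*`-invertible if `(I · I⁻¹)^* = D`. -/
def StarInvertible (I : Ideal D) : Prop :=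
  s.star ((I : FractionalIdeal D⁰ K) * (I : FractionalIdeal D⁰ K)⁻¹) = 1

/-- `D` is a `*`-SH domain: every principal ideal generated by a nonzero nonunit is a
`*`-product of finitely many `*`-homogeneous ideals. -/
def IsSHDomain : Prop :=
  ∀ x : D, x ≠ 0 → ¬IsUnit x →
    ∃ T : Multiset (Ideal D), (∀ J ∈ T, s.IsHomog J) ∧
      s.star ((T.prod : Ideal D) : FractionalIdeal D⁰ K) =
        ((Ideal.span {x} : Ideal D) : FractionalIdeal D⁰ K)

/-- `D` has finite `*`-character: every nonzero nonunit lies in only finitely many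
maximal `*`-ideals. -/
def FiniteStarCharacter : Prop :=
  ∀ x : D, x ≠ 0 → ¬IsUnit x → {P : Ideal D | s.IsMaxStarIdeal P ∧ x ∈ P}.Finite

end StarOperation

/-!
The elements outside `M(I)` are exactly the `t` with `(tD + I)^* = D`. For such a `t`, if
`ty ∈ I` then `y(tD + I) ⊆ I`, and applying `*` gives `yD = y(tD + I)^* ⊆ I^* = I`. So the
elements outside `M(I)` are nonzerodivisors modulo `I`, and inverting them and contracting back
does not enlarge `I`.
-/

theorem comap_map_algebraMap_eq_self_iff_colon {R : Type*} [CommRing R] (S : Submonoid R)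
    (L : Type*) [CommRing L] [Algebra R L] [IsLocalization S L] (I : Ideal R) :
    (I.map (algebraMap R L)).comap (algebraMap R L) = I ↔ ∀ t ∈ S, I.colon {t} = I := by
  have mem_contraction (y : R) :
      y ∈ (I.map (algebraMap R L)).comap (algebraMap R L) ↔ ∃ t ∈ S, y ∈ I.colon {t} := by
    simp only [Ideal.mem_comap, IsLocalization.algebraMap_mem_map_algebraMap_iff S,
      Submodule.mem_colon_singleton, smul_eq_mul, mul_comm]
  constructor
  · intro h t ht
    refine le_antisymm (fun y hy ↦ ?_) Ideal.le_colon
    rw [← h, mem_contraction]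
    exact ⟨t, ht, hy⟩
  · intro h
    refine le_antisymm (fun y hy ↦ ?_) Ideal.le_comap_map
    obtain ⟨t, ht, hyt⟩ := (mem_contraction y).mp hy
    rwa [h t ht] at hyt

namespace StarOperation

variable {D K : Type*} [CommRing D] [IsDomain D] [Field K] [Algebra D K] [IsFractionRing D K]
variable {s : StarOperation D K}

theorem spanSingleton_mul_star_le {x : K} {A B : FractionalIdeal D⁰ K} (hA : A ≠ 0) (hB : B ≠ 0)
    (h : FractionalIdeal.spanSingleton D⁰ x * A ≤ B) :
    FractionalIdeal.spanSingleton D⁰ x * s.star A ≤ s.star B := by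
  rcases eq_or_ne x 0 with rfl | hx
  · simp
  have x_isUnit : IsUnit (FractionalIdeal.spanSingleton D⁰ x) :=
    .of_mul_eq_one _ (FractionalIdeal.spanSingleton_mul_inv K hx)
  have hxA : FractionalIdeal.spanSingleton D⁰ x * A ≠ 0 := x_isUnit.mul_right_eq_zero.not.mpr hA
  rw [← s.star_smul x A hx hA]
  exact s.star_mono _ _ hxA hB h

theorem IsStarIdeal.colon_eq_self {I J : Ideal D} (hI : s.IsStarIdeal I)
    (hJ : s.StarComaximal J I) : I.colon (J : Set D) = I := by
  obtain ⟨hI_ne_bot, hI_star⟩ := hI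
  refine le_antisymm (fun y hy ↦ ?_) Ideal.le_colon
  have mul_sum_le : Ideal.span {y} * (J + I) ≤ I := by
    rw [mul_add]
    exact sup_le (Ideal.span_singleton_mul_le_iff.mpr (Submodule.mem_colon.mp hy))
      Ideal.mul_le_right
  have sum_ne_bot : J + I ≠ ⊥ := ne_bot_of_le_ne_bot hI_ne_bot le_sup_right
  have mul_star_le := spanSingleton_mul_star_le (s := s) (x := algebraMap D K y)
    (FractionalIdeal.coeIdeal_ne_zero.mpr sum_ne_bot)
    (FractionalIdeal.coeIdeal_ne_zero.mpr hI_ne_bot)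
    (by rwa [← FractionalIdeal.coeIdeal_span_singleton, ← FractionalIdeal.coeIdeal_mul,
      FractionalIdeal.coeIdeal_le_coeIdeal])
  rwa [hJ, mul_one, hI_star, ← FractionalIdeal.coeIdeal_span_singleton,
    FractionalIdeal.coeIdeal_le_coeIdeal, Ideal.span_singleton_le_iff_mem] at mul_star_le

theorem notMem_MSet_iff {I : Ideal D} {t : D} :
    t ∉ s.MSet I ↔ s.StarComaximal (Ideal.span {t}) I :=
  not_not

end StarOperation

theorem homog_localization_contraction_general {D K : Type*} [CommRing D] [IsDomain D] [Field K]
    [Algebra D K] [IsFractionRing D K] (s : StarOperation D K) {I : Ideal D}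
    (hI : s.IsStarIdeal I) (S : Submonoid D)
    (hS : ∀ t ∈ S, s.StarComaximal (Ideal.span {t}) I)
    (L : Type*) [CommRing L] [Algebra D L] [IsLocalization S L] :
    (I.map (algebraMap D L)).comap (algebraMap D L) = I := by
  refine (comap_map_algebraMap_eq_self_iff_colon S L I).mpr fun t ht ↦ ?_
  rw [← Submodule.colon_span]
  exact hI.colon_eq_self (hS t ht)

/-- Let `I` be a `*`-homogeneous ideal of `D`, and let `M` be the (prime)
maximal `*`-ideal `M(I)`. Then `I·D_M ∩ D = I`, i.e. the contraction to `D` of the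
extension of `I` to the localization of `D` at `M` equals `I`. -/
theorem homog_localization_contraction {D K : Type*} [CommRing D] [IsDomain D] [Field K]
    [Algebra D K] [IsFractionRing D K] (s : StarOperation D K) (hs : s.FiniteCharacter)
    (I : Ideal D) (hI : s.IsHomog I) (M : Ideal D) [M.IsPrime]
    (hM : (M : Set D) = s.MSet I) :
    Ideal.comap (algebraMap D (Localization.AtPrime M))
      (Ideal.map (algebraMap D (Localization.AtPrime M)) I) = I := by
  refine homog_localization_contraction_general s hI.2.1 M.primeCompl (fun t ht ↦ ?_) _
  rw [← StarOperation.notMem_MSet_iff, ← hM]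
  exact ht
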